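/- (Ticket zone principle on the line.) Let V : ℝ → ℝ be Borel measurable, locally integrable and nonnegative almost everywhere, assume Σ_V < ∞, and let λ be a real number with λ > Σ_V. Then for every R₁ > 0 there exist real numbers R₂, R₃ with R₁ ≤ R₂ < R₃ such that λ_V(A_{R₁,R₃}) ≤ λ and λ_V(A_{R₂,R₃}) = λ, where A_{r,s} := {x ∈ ℝ : r ≤ |x| ≤ s}. (This is the paper's Corollary 3.4 for the metric graph G = ℝ with center x = 0.) -/

import Mathlib

open MeasureTheory Set Filter Topology
open scoped ENNReal

/-- Rayleigh quotient of a test function `f` for the Schrödinger form with potential `V`. -/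
noncomputable def rayleigh (V : ℝ → ℝ) (f : ℝ → ℝ) : ℝ :=
  (∫ x, ((deriv f x) ^ 2 + V x * (f x) ^ 2)) / (∫ x, (f x) ^ 2)

/-- `f` is an admissible test function for the closed set `S`: continuously differentiable,
not identically zero, with compact support contained in `S`. -/
def TestFor (S : Set ℝ) (f : ℝ → ℝ) : Prop :=
  ContDiff ℝ 1 f ∧ f ≠ 0 ∧ HasCompactSupport f ∧ tsupport f ⊆ S

/-- Dirichlet ground state energy `λ_V(S)`, with `sInf ∅ = ∞`. -/
noncomputable def lambdaV (V : ℝ → ℝ) (S : Set ℝ) : ℝ≥0∞ :=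
  sInf {e : ℝ≥0∞ | ∃ f : ℝ → ℝ, TestFor S f ∧ e = ENNReal.ofReal (rayleigh V f)}

/-- `Σ_V`, the infimum of the essential spectrum of `-d²/dx² + V` on `ℝ`, characterized
Persson-style as `sup_{R>0} λ_V({|x| ≥ R})`. -/
noncomputable def SigmaV (V : ℝ → ℝ) : ℝ≥0∞ :=
  ⨆ R : ℝ, ⨆ _ : 0 < R, lambdaV V {x : ℝ | R ≤ |x|}

/-- A `k`-partition of `ℝ`: `k` closed connected subsets with nonempty interior whose
pairwise intersections are contained in both frontiers. -/
def IsPartitionR (k : ℕ) (G : Fin k → Set ℝ) : Prop :=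
  (∀ i, IsClosed (G i)) ∧ (∀ i, IsConnected (G i)) ∧
    (∀ i, (interior (G i)).Nonempty) ∧
    ∀ i j, i ≠ j → G i ∩ G j ⊆ frontier (G i) ∩ frontier (G j)

/-- The energy `Δ(P)` of a partition: the maximum of the ground state energies. -/
noncomputable def energyR (V : ℝ → ℝ) {k : ℕ} (G : Fin k → Set ℝ) : ℝ≥0∞ :=
  ⨆ i, lambdaV V (G i)

/-- The infimal `k`-partition energy `Δ*_k(ℝ)`. -/
noncomputable def optEnergyR (V : ℝ → ℝ) (k : ℕ) : ℝ≥0∞ :=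
  ⨅ G : {G : Fin k → Set ℝ // IsPartitionR k G}, energyR V G.1


/-- derivative of the model cutoff -/
noncomputable def cutK (t : ℝ) : ℝ := 1 - 1 / max (t ^ 2) 1

/-- model cutoff function -/
noncomputable def cutH (t : ℝ) : ℝ := ∫ s in (0 : ℝ)..t, cutK s

lemma cutK_cont : Continuous cutK := by
  unfold cutK
  refine continuous_const.sub (continuous_const.div (by fun_prop) ?_)
  intro x
  have : (1 : ℝ) ≤ max (x ^ 2) 1 := le_max_right _ _
  linarith

lemma cutK_nonneg (t : ℝ) : 0 ≤ cutK t := by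
  unfold cutK
  have : (1 : ℝ) ≤ max (t ^ 2) 1 := le_max_right _ _
  have := (div_le_one (by linarith)).2 this
  linarith

lemma cutK_le (t : ℝ) : cutK t ≤ 1 := by
  unfold cutK
  have : (1 : ℝ) ≤ max (t ^ 2) 1 := le_max_right _ _
  have : 0 ≤ 1 / max (t ^ 2) 1 := by positivity
  linarith

lemma cutH_hasDeriv (t : ℝ) : HasDerivAt cutH (cutK t) t :=
  intervalIntegral.integral_hasDerivAt_right (cutK_cont.intervalIntegrable _ _)
    (cutK_cont.stronglyMeasurableAtFilter _ _) cutK_cont.continuousAt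

lemma cutH_contDiff : ContDiff ℝ 1 cutH := by
  rw [contDiff_one_iff_deriv]
  refine ⟨fun t => (cutH_hasDeriv t).differentiableAt, ?_⟩
  have : deriv cutH = cutK := funext fun t => (cutH_hasDeriv t).deriv
  rw [this]; exact cutK_cont

lemma cutH_zero {t : ℝ} (ht : |t| ≤ 1) : cutH t = 0 := by
  unfold cutH
  apply intervalIntegral.integral_zero_ae
  refine Eventually.of_forall fun s hs => ?_
  have h1 : |s| ≤ 1 := by
    rw [uIoc, mem_Ioc] at hs
    rw [abs_le] at *
    rcases le_total 0 t with h | h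
    · simp [h] at hs; constructor <;> linarith
    · simp [h] at hs; constructor <;> linarith
  have : s ^ 2 ≤ 1 := by rw [← sq_abs]; nlinarith [abs_nonneg s]
  simp [cutK, max_eq_right this]

lemma cutH_abs_le (t : ℝ) : |cutH t| ≤ |t| := by
  have := intervalIntegral.norm_integral_le_of_norm_le_const (a := 0) (b := t) (f := cutK) (C := 1)
    (fun x _ => by rw [Real.norm_eq_abs, abs_of_nonneg (cutK_nonneg x)]; exact cutK_le x)
  simpa [cutH] using this

lemma cutH_close (t : ℝ) : |t - cutH t| ≤ 4 := by
  have e : t - cutH t = ∫ s in (0 : ℝ)..t, (1 - cutK s) := by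
    rw [intervalIntegral.integral_sub (by simp) (cutK_cont.intervalIntegrable _ _)]
    simp [cutH]
  rw [e]
  have h2 : ∫ s in (0 : ℝ)..t, 2 * (1 / (1 + s ^ 2)) = 2 * Real.arctan t := by
    rw [intervalIntegral.integral_const_mul, integral_one_div_one_add_sq]; simp
  have hc : Continuous fun s : ℝ => 2 * (1 / (1 + s ^ 2)) := by
    refine continuous_const.mul (continuous_const.div (by fun_prop) ?_)
    intro x; positivity
  have := intervalIntegral.norm_integral_le_abs_of_norm_le (a := 0) (b := t) (μ := volume)
    (f := fun s => 1 - cutK s)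
    (g := fun s => 2 * (1 / (1 + s ^ 2))) (Eventually.of_forall fun s => by
      rw [Real.norm_eq_abs, abs_of_nonneg (by linarith [cutK_le s])]
      have : 1 - cutK s = 1 / max (s ^ 2) 1 := by unfold cutK; ring
      rw [this, mul_one_div]
      have h1 : (1 : ℝ) ≤ max (s ^ 2) 1 := le_max_right _ _
      have h3 : s ^ 2 ≤ max (s ^ 2) 1 := le_max_left _ _
      rw [div_le_div_iff₀ (by linarith) (by positivity)]
      linarith) (hc.intervalIntegrable _ _)
  rw [h2] at this
  refine this.trans ?_
  rw [abs_le]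
  constructor <;> linarith [Real.arctan_lt_pi_div_two t, Real.neg_pi_div_two_lt_arctan t, Real.pi_lt_four]

lemma sq_cs {f : ℝ → ℝ} (hc : HasCompactSupport f) : HasCompactSupport (fun x => (f x) ^ 2) := by
  refine hc.mono fun x hx => ?_
  intro h
  exact hx (by simp [h])

lemma lambda_le {V f : ℝ → ℝ} {S : Set ℝ} (h : TestFor S f) :
    lambdaV V S ≤ ENNReal.ofReal (rayleigh V f) := sInf_le ⟨f, h, rfl⟩

/-- numerator -/
noncomputable def num (V f : ℝ → ℝ) : ℝ := ∫ x, ((deriv f x) ^ 2 + V x * (f x) ^ 2)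

lemma int_d {f : ℝ → ℝ} (hf : ContDiff ℝ 1 f) (hc : HasCompactSupport f) :
    Integrable (fun x => (deriv f x) ^ 2) := by
  have h1 : Continuous (deriv f) := hf.continuous_deriv le_rfl
  refine (h1.pow 2).integrable_of_hasCompactSupport ?_
  exact sq_cs hc.deriv

lemma int_V {V f : ℝ → ℝ} (hV : LocallyIntegrable V) (hf : Continuous f)
    (hc : HasCompactSupport f) :
    Integrable (fun x => V x * (f x) ^ 2) := by
  have := hV.integrable_smul_right_of_hasCompactSupport (hf.pow 2)
    (sq_cs hc)
  simpa [smul_eq_mul] using this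

lemma int_s {f : ℝ → ℝ} (hf : Continuous f)
    (hc : HasCompactSupport f) :
    Integrable (fun x => (f x) ^ 2) := 
  (hf.pow 2).integrable_of_hasCompactSupport
    (sq_cs hc)

lemma den_pos {f : ℝ → ℝ} (hf : Continuous f)
    (hc : HasCompactSupport f) (h0 : f ≠ 0) : 0 < ∫ x, (f x) ^ 2 := by
  obtain ⟨x, hx⟩ := Function.ne_iff.1 h0
  refine (hf.pow 2).integral_pos_of_hasCompactSupport_nonneg_nonzero
    (sq_cs hc) (fun x => sq_nonneg _) (x := x) ?_
  simpa using hx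

lemma num_ge {V f : ℝ → ℝ} (hV : LocallyIntegrable V)
    (hpos : ∀ᵐ x ∂(volume : Measure ℝ), 0 ≤ V x) (hf : ContDiff ℝ 1 f)
    (hc : HasCompactSupport f) : ∫ x, (deriv f x) ^ 2 ≤ num V f := by
  refine integral_mono_ae (int_d hf hc) ((int_d hf hc).add (int_V hV hf.continuous hc)) ?_
  filter_upwards [hpos] with x hx
  have := mul_nonneg hx (sq_nonneg (f x))
  linarith

lemma osc {f : ℝ → ℝ} (hf : ContDiff ℝ 1 f)
    (hc : HasCompactSupport f) {a b : ℝ} (hab : a ≤ b) :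
    (f b - f a) ^ 2 ≤ (b - a) * ∫ x, (deriv f x) ^ 2 := by
  have hd : Continuous (deriv f) := hf.continuous_deriv le_rfl
  have ftc : ∫ x in a..b, deriv f x = f b - f a :=
    intervalIntegral.integral_deriv_eq_sub (fun x _ => (hf.differentiable one_ne_zero) x)
      (hd.intervalIntegrable _ _)
  have h1 : ∫ x in a..b, (deriv f x) ^ 2 ≤ ∫ x, (deriv f x) ^ 2 := by
    rw [intervalIntegral.integral_of_le hab]
    exact setIntegral_le_integral (int_d hf hc) (Eventually.of_forall fun x => sq_nonneg _)
  rcases hab.eq_or_lt with rfl | hlt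
  · simp
  set L := b - a with hL
  set A := f b - f a with hA
  have hLpos : 0 < L := by linarith
  have h2 : 0 ≤ ∫ x in a..b, (L * deriv f x - A) ^ 2 :=
    intervalIntegral.integral_nonneg hab fun x _ => sq_nonneg _
  have h3 : ∫ x in a..b, (L * deriv f x - A) ^ 2
      = L ^ 2 * (∫ x in a..b, (deriv f x) ^ 2) - 2 * L * A * A + A ^ 2 * L := by
    have e : ∀ x, (L * deriv f x - A) ^ 2 =
      L ^ 2 * (deriv f x) ^ 2 - 2 * L * A * deriv f x + A ^ 2 := fun x => by ring
    simp_rw [e]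
    have i1 : IntervalIntegrable (fun x => L ^ 2 * (deriv f x) ^ 2) volume a b :=
      (continuous_const.mul (hd.pow 2)).intervalIntegrable _ _
    have i2 : IntervalIntegrable (fun x => 2 * L * A * deriv f x) volume a b :=
      (continuous_const.mul hd).intervalIntegrable _ _
    rw [intervalIntegral.integral_add (i1.sub i2) (by simp), intervalIntegral.integral_sub i1 i2,
      intervalIntegral.integral_const_mul, intervalIntegral.integral_const_mul, ftc]
    simp [← hL]; ring
  rw [h3] at h2
  have h4 : A ^ 2 ≤ L * ∫ x in a..b, (deriv f x) ^ 2 := by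
    have : 0 ≤ L * (L * (∫ x in a..b, (deriv f x) ^ 2) - A ^ 2) := by nlinarith
    have := nonneg_of_mul_nonneg_right this hLpos
    linarith
  exact h4.trans (mul_le_mul_of_nonneg_left h1 hLpos.le)

lemma cut_lemma {V f : ℝ → ℝ} (hV : LocallyIntegrable V)
    (hpos : ∀ᵐ x ∂(volume : Measure ℝ), 0 ≤ V x) (hf : ContDiff ℝ 1 f)
    (hc : HasCompactSupport f) (h0 : f ≠ 0) {s : ℝ} (hs : 0 ≤ s)
    (hsupp : ∀ x, f x ≠ 0 → |x| ≤ s) {η ε : ℝ} (hη : 0 < η) (hη2 : η < 1 / 2) (hε : 0 < ε)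
    (hsmall : 32 * s * ε ^ 2 ≤ η ^ 2 * ∫ x, (f x) ^ 2) :
    ∃ g : ℝ → ℝ, ContDiff ℝ 1 g ∧ HasCompactSupport g ∧ g ≠ 0 ∧ (∀ x, |f x| ≤ ε → g x = 0) ∧
      rayleigh V g ≤ rayleigh V f / (1 - 2 * η) := by
  set g : ℝ → ℝ := fun x => ε * cutH (f x / ε) with hg
  have hgz : ∀ x, |f x| ≤ ε → g x = 0 := by
    intro x hx
    have : |f x / ε| ≤ 1 := by rw [abs_div, abs_of_pos hε]; exact (div_le_one hε).2 hx
    simp [hg, cutH_zero this]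
  have hgc : ContDiff ℝ 1 g := contDiff_const.mul (cutH_contDiff.comp (hf.div_const ε))
  have hgs : HasCompactSupport g :=
    hc.comp_left (g := fun y : ℝ => ε * cutH (y / ε)) (by simp [cutH])
  have hgd : ∀ x, deriv g x = cutK (f x / ε) * deriv f x := by
    intro x
    have h1 : HasDerivAt f (deriv f x) x := ((hf.differentiable one_ne_zero) x).hasDerivAt
    have h2 := ((cutH_hasDeriv (f x / ε)).comp x (h1.div_const ε)).const_mul ε
    have h3 : deriv g x = ε * (cutK (f x / ε) * (deriv f x / ε)) := h2.deriv
    rw [h3]; field_simp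
  have hgle : ∀ x, (g x) ^ 2 ≤ (f x) ^ 2 := by
    intro x
    rw [sq_le_sq]
    have := cutH_abs_le (f x / ε)
    rw [abs_div, abs_of_pos hε, le_div_iff₀ hε] at this
    simp only [hg, abs_mul, abs_of_pos hε]; linarith
  have hnum : num V g ≤ num V f := by
    refine integral_mono_ae ((int_d hgc hgs).add (int_V hV hgc.continuous hgs))
      ((int_d hf hc).add (int_V hV hf.continuous hc)) ?_
    filter_upwards [hpos] with x hx
    have a1 := mul_le_mul_of_nonneg_left (hgle x) hx
    have a2 : (deriv g x) ^ 2 ≤ (deriv f x) ^ 2 := by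
      rw [hgd, mul_pow]
      have : cutK (f x / ε) ^ 2 ≤ 1 := by
        nlinarith [cutK_nonneg (f x / ε), cutK_le (f x / ε)]
      nlinarith [sq_nonneg (deriv f x)]
    exact add_le_add a2 a1
  set N := ∫ x, (f x) ^ 2 with hN
  have hNpos : 0 < N := den_pos hf.continuous hc h0
  have hden : (1 - 2 * η) * N ≤ ∫ x, (g x) ^ 2 := by
    have hind : Integrable ((Icc (-s) s).indicator fun _ : ℝ => 16 * ε ^ 2 / η) :=
      (integrable_indicator_iff measurableSet_Icc).2 (integrableOn_const (by simp) )
    have key : ∫ x, ((1 - η) * (f x) ^ 2 - (Icc (-s) s).indicator (fun _ : ℝ => 16 * ε ^ 2 / η) x)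
        ≤ ∫ x, (g x) ^ 2 := by
      refine integral_mono (((int_s hf.continuous hc).const_mul _).sub hind)
        (int_s hgc.continuous hgs) ?_
      intro x
      by_cases hx : f x = 0
      · have : 0 ≤ (Icc (-s) s).indicator (fun _ : ℝ => 16 * ε ^ 2 / η) x :=
          indicator_nonneg (fun _ _ => by positivity) x
        simp only [hx]
        nlinarith [sq_nonneg (g x)]
      · have hxm : x ∈ Icc (-s) s := abs_le.1 (hsupp x hx)
        simp only [indicator_of_mem hxm]
        have c1 : |f x - g x| ≤ 4 * ε := by
          have := cutH_close (f x / ε)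
          have e : f x - g x = ε * (f x / ε - cutH (f x / ε)) := by
            simp only [hg]; field_simp
          rw [e, abs_mul, abs_of_pos hε]; nlinarith
        have c2 : (f x - g x) ^ 2 ≤ 16 * ε ^ 2 := by
          rw [← sq_abs]; nlinarith [abs_nonneg (f x - g x)]
        have c3 : (f x - g x) ^ 2 / η ≤ 16 * ε ^ 2 / η := by gcongr
        have c4 : (1 - η) * (f x) ^ 2 - (g x) ^ 2 ≤ (f x - g x) ^ 2 / η := by
          rw [le_div_iff₀ hη]
          have : (f x - g x) ^ 2 - ((1 - η) * (f x) ^ 2 - (g x) ^ 2) * η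
            = (g x * (1 + η) - f x)^2 /(1+η) + (f x)^2 * (1 - η + η^2 - 1/(1+η)) := by
            field_simp; ring
          have h5 : (1 - η + η^2 - 1/(1+η)) = η^3/(1+η) := by field_simp; ring
          have : 0 ≤ (f x - g x) ^ 2 - ((1 - η) * (f x) ^ 2 - (g x) ^ 2) * η := by
            rw [this, h5]; positivity
          linarith
        linarith
    rw [integral_sub ((int_s hf.continuous hc).const_mul _) hind, integral_const_mul,
      integral_indicator measurableSet_Icc, setIntegral_const] at key
    simp only [Measure.real, Real.volume_Icc, smul_eq_mul] at key
    rw [ENNReal.toReal_ofReal (by linarith)] at key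
    have : (s - -s) * (16 * ε ^ 2 / η) ≤ η * N := by
      have : (s - -s) * (16 * ε ^ 2 / η) = 32 * s * ε ^ 2 / η := by ring
      rw [this, div_le_iff₀ hη]; linarith
    linarith
  have hgp : 0 < ∫ x, (g x) ^ 2 := lt_of_lt_of_le (mul_pos (by linarith) hNpos) hden
  refine ⟨g, hgc, hgs, ?_, hgz, ?_⟩
  · intro h; rw [h] at hgp; simp at hgp
  · have hfn : 0 ≤ num V f := (integral_nonneg fun x => sq_nonneg _).trans (num_ge hV hpos hf hc)
    change num V g / _ ≤ num V f / N / _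
    rw [div_div]
    rw [mul_comm N]
    exact div_le_div₀ hfn hnum (mul_pos (by linarith) hNpos) hden

lemma vanish {f : ℝ → ℝ} (hf : Continuous f) {r : ℝ} (hr : 0 < r)
    (h : ∀ x, f x ≠ 0 → r ≤ |x|) {x : ℝ} (hx : |x| ≤ r) : f x = 0 := by
  have hcl : IsClosed {x | f x = 0} := isClosed_eq hf continuous_const
  have hsub : Ioo (-r) r ⊆ {x | f x = 0} := by
    intro y hy
    by_contra hne
    exact absurd (h y hne) (not_le.2 (abs_lt.2 hy))
  have := hcl.closure_subset_iff.2 hsub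
  rw [closure_Ioo (by linarith)] at this
  exact this (abs_le.1 hx)

lemma lambda_le_of {V : ℝ → ℝ} {S : Set ℝ} {c : ℝ}
    (h : ∀ c' > c, ∃ f, TestFor S f ∧ rayleigh V f ≤ c') : lambdaV V S ≤ ENNReal.ofReal c := by
  have h1 : ∀ c' > c, lambdaV V S ≤ ENNReal.ofReal c' := fun c' hc' => by
    obtain ⟨f, hf, hr⟩ := h c' hc'
    exact (lambda_le hf).trans (ENNReal.ofReal_le_ofReal hr)
  have h2 : Tendsto (fun c' => ENNReal.ofReal c') (𝓝[>] c) (𝓝 (ENNReal.ofReal c)) :=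
    (ENNReal.continuous_ofReal.tendsto c).mono_left nhdsWithin_le_nhds
  refine ge_of_tendsto h2 ?_
  filter_upwards [self_mem_nhdsWithin] with c' hc' using h1 c' hc'

lemma exists_of_lt {V : ℝ → ℝ} {S : Set ℝ} {c : ℝ} (hc : 0 < c)
    (h : lambdaV V S < ENNReal.ofReal c) : ∃ f, TestFor S f ∧ rayleigh V f < c := by
  obtain ⟨e, ⟨f, hf, rfl⟩, he⟩ := sInf_lt_iff.1 h
  exact ⟨f, hf, (ENNReal.ofReal_lt_ofReal_iff hc).1 he⟩

lemma lambda_top {V : ℝ → ℝ} {r s : ℝ} (h : s ≤ r) :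
    lambdaV V {x : ℝ | r ≤ |x| ∧ |x| ≤ s} = ⊤ := by
  unfold lambdaV
  refine (congrArg sInf ?_).trans sInf_empty
  rw [eq_empty_iff_forall_notMem]
  rintro e ⟨f, ⟨hf, h0, hc, hs⟩, -⟩
  obtain ⟨x, hx⟩ := Function.ne_iff.1 h0
  have hop : IsOpen (Function.support f) := hf.continuous.isOpen_support
  have hfin : (Function.support f).Finite := by
    refine (Set.toFinite {-s, s}).subset fun y hy => ?_
    obtain ⟨h1, h2⟩ := hs (subset_tsupport f hy)
    have : |y| = s := le_antisymm h2 (h.trans h1)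
    rcases abs_choice y with h | h <;> simp <;> [right; left] <;> linarith
  have : (Function.support f) = ∅ := by
    by_contra hne
    exact (infinite_of_mem_nhds x (hop.mem_nhds hx)) hfin
  rw [Function.support_eq_empty_iff] at this
  exact h0 this

lemma right_step {V : ℝ → ℝ} (hV : LocallyIntegrable V)
    (hpos : ∀ᵐ x ∂(volume : Measure ℝ), 0 ≤ V x) {r s c : ℝ} (hr : 0 < r) (hs : 0 < s) (hc : 0 < c)
    (h : lambdaV V {x : ℝ | r ≤ |x| ∧ |x| ≤ s} < ENNReal.ofReal c) :
    ∃ r' > r, lambdaV V {x : ℝ | r' ≤ |x| ∧ |x| ≤ s} ≤ ENNReal.ofReal c := by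
  obtain ⟨f, ⟨hf, h0, hcs, hts⟩, hray⟩ := exists_of_lt hc h
  have hsup : ∀ x, f x ≠ 0 → r ≤ |x| ∧ |x| ≤ s := fun x hx => hts (subset_tsupport f hx)
  have hN := den_pos hf.continuous hcs h0
  obtain ⟨η, hη, hη2, hη3⟩ : ∃ η : ℝ, 0 < η ∧ η < 1 / 2 ∧ rayleigh V f / (1 - 2 * η) ≤ c := by
    have ht : Tendsto (fun η : ℝ => rayleigh V f / (1 - 2 * η)) (𝓝[>] 0)
        (𝓝 (rayleigh V f / (1 - 2 * 0))) := by
      apply Tendsto.mono_left _ nhdsWithin_le_nhds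
      exact ContinuousAt.div (by fun_prop) (by fun_prop) (by norm_num)
    have h1 := ht.eventually_lt_const (u := c) (by simpa using hray)
    have h2 : ∀ᶠ η : ℝ in 𝓝[>] 0, η < 1 / 2 :=
      nhdsWithin_le_nhds (Iio_mem_nhds (by norm_num))
    obtain ⟨η, h1, h2, h3⟩ := (h1.and (h2.and self_mem_nhdsWithin)).exists
    exact ⟨η, h3, h2, h1.le⟩
  set ε := Real.sqrt (η ^ 2 * (∫ x, (f x) ^ 2) / (32 * s)) with hε
  have hεp : 0 < ε := Real.sqrt_pos.2 (by positivity)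
  obtain ⟨g, hg, hgs, hg0, hgz, hgr⟩ := cut_lemma hV hpos hf hcs h0 hs.le (fun x hx => (hsup x hx).2)
    hη hη2 hεp (by rw [hε, Real.sq_sqrt (by positivity)]; apply le_of_eq; field_simp)
  have hgf : ∀ x ∈ tsupport g, ε ≤ |f x| := by
    have hcl : IsClosed {x | ε ≤ |f x|} := isClosed_le continuous_const hf.continuous.abs
    exact closure_minimal (fun x hx => by
      by_contra hcon
      exact hx (hgz x (not_le.1 hcon).le)) hcl
  have hne : (tsupport g).Nonempty := by
    obtain ⟨x, hx⟩ := Function.ne_iff.1 hg0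
    exact ⟨x, subset_tsupport g hx⟩
  obtain ⟨y, hy, hmin⟩ := IsCompact.exists_isMinOn hgs hne continuous_abs.continuousOn
  refine ⟨|y|, ?_, ?_⟩
  · by_contra hcon
    have := vanish hf.continuous hr (fun x hx => (hsup x hx).1) (not_lt.1 hcon)
    have h2 := hgf y hy
    rw [this, abs_zero] at h2
    linarith
  · refine (lambda_le (f := g) (S := {x : ℝ | |y| ≤ |x| ∧ |x| ≤ s}) ⟨hg, hg0, hgs, fun x hx => ⟨hmin hx, (hsup x ?_).2⟩⟩).trans
      (ENNReal.ofReal_le_ofReal (hgr.trans hη3))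
    intro h
    have := hgf x hx
    rw [h, abs_zero] at this
    linarith

lemma left_step {V : ℝ → ℝ} (hV : LocallyIntegrable V)
    (hpos : ∀ᵐ x ∂(volume : Measure ℝ), 0 ≤ V x) {r s c : ℝ} (hs : 0 < s) (hc : 0 < c)
    (h : ∀ δ > 0, ∃ r', 0 < r' ∧ r - δ < r' ∧ r' ≤ r ∧
      lambdaV V {x : ℝ | r' ≤ |x| ∧ |x| ≤ s} ≤ ENNReal.ofReal c) :
    lambdaV V {x : ℝ | r ≤ |x| ∧ |x| ≤ s} ≤ ENNReal.ofReal c := by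
  apply lambda_le_of
  intro c' hc'
  obtain ⟨m, hm, hmc⟩ := exists_between hc'
  have hmp : 0 < m := hc.trans hm
  obtain ⟨η, hη, hη2, hη3⟩ : ∃ η : ℝ, 0 < η ∧ η < 1 / 2 ∧ m / (1 - 2 * η) ≤ c' := by
    have ht : Tendsto (fun η : ℝ => m / (1 - 2 * η)) (𝓝[>] 0)
        (𝓝 (m / (1 - 2 * 0))) := by
      apply Tendsto.mono_left _ nhdsWithin_le_nhds
      exact ContinuousAt.div (by fun_prop) (by fun_prop) (by norm_num)
    have h1 := ht.eventually_lt_const (u := c') (by simpa using hmc)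
    have h2 : ∀ᶠ η : ℝ in 𝓝[>] 0, η < 1 / 2 :=
      nhdsWithin_le_nhds (Iio_mem_nhds (by norm_num))
    obtain ⟨η, h1, h2, h3⟩ := (h1.and (h2.and self_mem_nhdsWithin)).exists
    exact ⟨η, h3, h2, h1.le⟩
  set δ := η ^ 2 / (32 * s * m) with hδ
  have hδp : 0 < δ := by positivity
  obtain ⟨r', hr', hr1, hr2, hl⟩ := h δ hδp
  obtain ⟨f, ⟨hf, h0, hcs, hts⟩, hray⟩ := exists_of_lt hmp
    (hl.trans_lt ((ENNReal.ofReal_lt_ofReal_iff hmp).2 hm))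
  have hsup : ∀ x, f x ≠ 0 → r' ≤ |x| ∧ |x| ≤ s := fun x hx => hts (subset_tsupport f hx)
  have hN := den_pos hf.continuous hcs h0
  set N := ∫ x, (f x) ^ 2 with hNdef
  have hE : ∫ x, (deriv f x) ^ 2 ≤ m * N :=
    (num_ge hV hpos hf hcs).trans ((div_lt_iff₀ hN).1 hray).le
  set ε := Real.sqrt (δ * (m * N)) with hε
  have hεp : 0 < ε := Real.sqrt_pos.2 (by positivity)
  have hε2 : ε ^ 2 = δ * (m * N) := Real.sq_sqrt (by positivity)
  obtain ⟨g, hg, hgs, hg0, hgz, hgr⟩ := cut_lemma hV hpos hf hcs h0 hs.le (fun x hx => (hsup x hx).2)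
    hη hη2 hεp (by rw [hε2, hδ]; apply le_of_eq; field_simp; rfl)
  have hI : 0 ≤ ∫ x, (deriv f x) ^ 2 := integral_nonneg fun x => sq_nonneg _
  have hz : ∀ x, |x| ≤ r' → f x = 0 := fun x hx =>
    vanish hf.continuous hr' (fun x hx => (hsup x hx).1) hx
  refine ⟨g, ⟨hg, hg0, hgs, ?_⟩, hgr.trans (le_trans ?_ hη3)⟩
  · have hcl : IsClosed {x : ℝ | r ≤ |x| ∧ |x| ≤ s} :=
      (isClosed_le continuous_const continuous_abs).inter
        (isClosed_le continuous_abs continuous_const)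
    refine closure_minimal (fun x hx => ?_) hcl
    have hfx : ε < |f x| := by
      by_contra hcon
      exact hx (hgz x (not_lt.1 hcon))
    have hfx0 : f x ≠ 0 := by
      intro h; rw [h, abs_zero] at hfx; linarith
    obtain ⟨hx1, hx2⟩ := hsup x hfx0
    refine ⟨?_, hx2⟩
    by_contra hcon
    have hosc : (f x) ^ 2 ≤ (|x| - r') * ∫ x, (deriv f x) ^ 2 := by
      rcases le_total 0 x with h | h
      · rw [abs_of_nonneg h] at hx1 ⊢
        have := osc hf hcs hx1
        rwa [hz r' (by rw [abs_of_pos hr']), sub_zero] at this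
      · rw [abs_of_nonpos h] at hx1 ⊢
        have := osc hf hcs (a := x) (b := -r') (by linarith)
        rw [hz (-r') (by rw [abs_neg, abs_of_pos hr']), zero_sub, neg_sq] at this
        convert this using 2; ring
    have h2 : (|x| - r') * ∫ x, (deriv f x) ^ 2 ≤ δ * (m * N) :=
      mul_le_mul (by linarith) hE hI hδp.le
    have h3 : ε ^ 2 < |f x| ^ 2 := by gcongr
    rw [sq_abs] at h3
    linarith
  · have : 0 < 1 - 2 * η := by linarith
    gcongr

/-- **Corollary 3.4 (ticket zone principle) for `G = ℝ`, centered at `0`.** If `Σ_V < ∞` and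
`λ > Σ_V`, then for any `R₁ > 0` there exist `R₃ > R₂ ≥ R₁` with
`λ_V(A_{R₁,R₃}) ≤ λ` and `λ_V(A_{R₂,R₃}) = λ`, where `A_{r,s} = {x : r ≤ |x| ≤ s}`. -/
theorem ticket_zone_principle (V : ℝ → ℝ) (hmeas : Measurable V)
    (hloc : LocallyIntegrable V) (hpos : ∀ᵐ x ∂(volume : Measure ℝ), 0 ≤ V x)
    (hfin : SigmaV V ≠ ⊤) (lam : ℝ) (hlam : SigmaV V < ENNReal.ofReal lam) :
    ∀ R₁ : ℝ, 0 < R₁ → ∃ R₂ R₃ : ℝ, R₁ ≤ R₂ ∧ R₂ < R₃ ∧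
      lambdaV V {x : ℝ | R₁ ≤ |x| ∧ |x| ≤ R₃} ≤ ENNReal.ofReal lam ∧
      lambdaV V {x : ℝ | R₂ ≤ |x| ∧ |x| ≤ R₃} = ENNReal.ofReal lam := by
  intro R₁ hR₁
  have hlp : 0 < lam := ENNReal.ofReal_pos.1 ((zero_le).trans_lt hlam)
  have h1 : lambdaV V {x : ℝ | R₁ ≤ |x|} < ENNReal.ofReal lam :=
    lt_of_le_of_lt (le_iSup₂ (f := fun (R : ℝ) (_ : 0 < R) => lambdaV V {x : ℝ | R ≤ |x|}) R₁ hR₁)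
      hlam
  obtain ⟨f, ⟨hf, h0, hcs, hts⟩, hray⟩ := exists_of_lt hlp h1
  obtain ⟨B, hB⟩ := (IsCompact.isBounded hcs).exists_norm_le
  set R₃ := max B 1 with hR₃
  have hR₃p : 0 < R₃ := lt_of_lt_of_le one_pos (le_max_right _ _)
  have hmem : lambdaV V {x : ℝ | R₁ ≤ |x| ∧ |x| ≤ R₃} ≤ ENNReal.ofReal lam :=
    (lambda_le (f := f) (S := {x : ℝ | R₁ ≤ |x| ∧ |x| ≤ R₃}) ⟨hf, h0, hcs, fun x hx => ⟨hts hx, (hB x hx).trans (le_max_left _ _)⟩⟩).trans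
      (ENNReal.ofReal_le_ofReal hray.le)
  set T : Set ℝ := {r | R₁ ≤ r ∧ lambdaV V {x : ℝ | r ≤ |x| ∧ |x| ≤ R₃} ≤ ENNReal.ofReal lam}
    with hT
  have hlt : ∀ r, lambdaV V {x : ℝ | r ≤ |x| ∧ |x| ≤ R₃} ≤ ENNReal.ofReal lam → r < R₃ := by
    intro r hr
    by_contra hcon
    rw [lambda_top (not_lt.1 hcon), top_le_iff] at hr
    exact ENNReal.ofReal_ne_top hr
  have hbdd : BddAbove T := ⟨R₃, fun r hr => (hlt r hr.2).le⟩
  have hR1T : R₁ ∈ T := ⟨le_rfl, hmem⟩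
  have hge : R₁ ≤ sSup T := le_csSup hbdd hR1T
  have hle : lambdaV V {x : ℝ | sSup T ≤ |x| ∧ |x| ≤ R₃} ≤ ENNReal.ofReal lam := by
    apply left_step hloc hpos hR₃p hlp
    intro δ hδ
    obtain ⟨r', hr', hr2⟩ := exists_lt_of_lt_csSup ⟨R₁, hR1T⟩ (sub_lt_self (sSup T) hδ)
    exact ⟨r', hR₁.trans_le hr'.1, hr2, le_csSup hbdd hr', hr'.2⟩
  refine ⟨sSup T, R₃, hge, hlt _ hle, hmem, le_antisymm hle ?_⟩
  by_contra hcon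
  obtain ⟨r', hr', hr2⟩ := right_step hloc hpos (hR₁.trans_le hge) hR₃p hlp (not_le.1 hcon)
  exact absurd (le_csSup hbdd (show r' ∈ T from ⟨hge.trans hr'.le, hr2⟩)) (not_le.2 hr')
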